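/- Let n ≥ 4, let 0 < Z ≤ 2^n and set a = ⌊log_2 Z⌋. Let s and c be integers with 2^n - 2^s < c < 2^n - 2^{s-1} and s > a. Then the number of 2^n-periodic binary sequences S with odd Hamming weight in one period, L_1(S) = c, and L_{1;Z}(S) = 2^n - 2^a is exactly 2^{c - 1 + s} - Z · 2^{c + s - a - 2}. -/

import Mathlib

/-- Generating polynomial `S^N(x) = s_0 + s_1 x + ... + s_{N-1} x^{N-1}` of one period
of an `N`-periodic binary sequence. -/
noncomputable def genPoly {N : ℕ} (S : Fin N → ZMod 2) : Polynomial (ZMod 2) :=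
  ∑ i : Fin N, Polynomial.C (S i) * Polynomial.X ^ (i : ℕ)

/-- Linear complexity `L(S) = N - deg (gcd (1 - x^N, S^N(x)))`. -/
noncomputable def linComp {N : ℕ} (S : Fin N → ZMod 2) : ℕ :=
  N - (EuclideanDomain.gcd (1 - Polynomial.X ^ N) (genPoly S)).natDegree

/-- Hamming weight of one period of an `N`-periodic binary sequence. -/
def wt {N : ℕ} (T : Fin N → ZMod 2) : ℕ :=
  (Finset.univ.filter (fun i => T i ≠ 0)).card

/-- `k`-error linear complexity `L_{N,k}(S)`. -/
noncomputable def errLC {N : ℕ} (S : Fin N → ZMod 2) (k : ℕ) : ℕ :=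
  sInf {c | ∃ T : Fin N → ZMod 2, wt T ≤ k ∧ linComp (S + T) = c}

/-- `k`-error linear complexity with a zone of length `Z`: `L_{N,k;Z}(S)`. -/
noncomputable def errLCZone {N : ℕ} (S : Fin N → ZMod 2) (k Z : ℕ) : ℕ :=
  sInf {c | ∃ T : Fin N → ZMod 2, wt T ≤ k ∧ (∀ i : Fin N, Z ≤ (i : ℕ) → T i = 0) ∧
    linComp (S + T) = c}

/-- `E_1(j)`: the sequence whose only nonzero term in one period is a `1` at position `j`. -/
def E1 {N : ℕ} (j : Fin N) : Fin N → ZMod 2 :=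
  fun i => if i = j then 1 else 0

/-!
Since `1 - X ^ (2 ^ n) = (X - 1) ^ (2 ^ n)` over `𝔽₂`, the linear complexity of a sequence measures
the order of vanishing of its generating polynomial at `1`. For `S` of odd weight the best single
error is therefore governed by the orders of contact at `1` of `S` with the monomials `X ^ j`.
As `X ^ d - 1` vanishes at `1` to order `2 ^ v₂(d)`, a contact of order at least `k` with `X ^ j`
determines `j` modulo the least power of two that is at least `k`.

Put `m = 2 ^ n - c`, so that `2 ^ (s - 1) < m < 2 ^ s`. Then `L₁(S) = c` says that `S` has
contact of order exactly `m` with `X ^ j` for a unique `j < 2 ^ s`, and `L_{1;Z}(S) = 2 ^ n - 2 ^ a`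
says that no position below `Z` is congruent to `j` modulo `2 ^ (a + 1)`, that is
`Z ≤ j % 2 ^ (a + 1)`. There are `(2 ^ (a + 1) - Z) * 2 ^ (s - a - 1)` such `j`, each of them
attained by `2 ^ (c - 1)` sequences.
-/

section OrderAtOne

open Polynomial

variable {F : Type*} [Field F]

lemma prime_X_sub_one : Prime (X - 1 : F[X]) := by
  simpa using prime_X_sub_C (1 : F)

lemma le_natDegree_gcd_X_sub_one_pow_iff {N k : ℕ} [DecidableEq F] (hk : k ≤ N) (f : F[X]) :
    k ≤ (EuclideanDomain.gcd ((X - 1) ^ N) f).natDegree ↔ (X - 1) ^ k ∣ f := by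
  obtain ⟨d, -, hassoc⟩ := (dvd_prime_pow prime_X_sub_one N).1
    (EuclideanDomain.gcd_dvd_left ((X - 1 : F[X]) ^ N) f)
  have hdeg : (EuclideanDomain.gcd ((X - 1) ^ N) f).natDegree = d := by
    rw [natDegree_eq_of_degree_eq (degree_eq_degree_of_associated hassoc), ← C_1, natDegree_pow,
      natDegree_X_sub_C, mul_one]
  rw [hdeg, ← pow_dvd_pow_iff prime_X_sub_one.ne_zero (prime_X_sub_one (F := F)).not_isUnit,
    ← hassoc.dvd_iff_dvd_right]
  exact ⟨fun h => h.trans (EuclideanDomain.gcd_dvd_right _ _),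
    fun h => EuclideanDomain.dvd_gcd (pow_dvd_pow _ hk) h⟩

/-- The order of contact of `f` with the monomial `X ^ j` at the point `1`: the order of vanishing
of `f - X ^ j` at `1`, which is `⊤` for `f = X ^ j`. -/
noncomputable def contactOrder (f : F[X]) (j : ℕ) : ℕ∞ :=
  emultiplicity (X - 1) (f - X ^ j)

lemma natCast_le_contactOrder_iff {f : F[X]} {j k : ℕ} :
    (k : ℕ∞) ≤ contactOrder f j ↔ (X - 1) ^ k ∣ f - X ^ j :=
  pow_dvd_iff_le_emultiplicity.symm

variable (p : ℕ) [Fact p.Prime] [CharP F p]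

lemma emultiplicity_X_sub_one_X_pow_sub_one {d : ℕ} (hd : d ≠ 0) :
    emultiplicity (X - 1 : F[X]) (X ^ d - 1) = (p ^ d.factorization p : ℕ) := by
  have hp : p.Prime := Fact.out
  have hsimple : emultiplicity (X - 1 : F[X]) (X ^ (ordCompl[p] d) - 1) = 1 := by
    refine le_antisymm (emultiplicity_le_one_of_separable prime_X_sub_one.not_isUnit ?_) ?_
    · rw [X_pow_sub_one_separable_iff, Ne, CharP.cast_eq_zero_iff F p]
      exact Nat.not_dvd_ordCompl hp hd
    · rw [← Nat.cast_one, ← pow_dvd_iff_le_emultiplicity, pow_one]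
      exact sub_one_dvd_pow_sub_one X _
  have hfrobenius : (X ^ d - 1 : F[X]) = (X ^ (ordCompl[p] d) - 1) ^ ordProj[p] d := by
    rw [sub_pow_char_pow, one_pow, ← pow_mul, mul_comm, Nat.ordProj_mul_ordCompl_eq_self]
  rw [hfrobenius, emultiplicity_pow prime_X_sub_one, hsimple, mul_one]

lemma X_sub_one_pow_dvd_X_pow_sub_one_iff {k d : ℕ} :
    (X - 1 : F[X]) ^ k ∣ X ^ d - 1 ↔ p ^ Nat.clog p k ∣ d := by
  have hp : p.Prime := Fact.out
  rcases eq_or_ne d 0 with rfl | hd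
  · simp
  rw [pow_dvd_iff_le_emultiplicity, emultiplicity_X_sub_one_X_pow_sub_one p hd, Nat.cast_le,
    ← Nat.clog_le_iff_le_pow hp.one_lt, hp.pow_dvd_iff_le_factorization hd]

lemma X_sub_one_pow_dvd_X_pow_sub_X_pow_iff {k i j : ℕ} :
    (X - 1 : F[X]) ^ k ∣ X ^ i - X ^ j ↔ i ≡ j [MOD p ^ Nat.clog p k] := by
  wlog hji : j ≤ i generalizing i j
  · rw [dvd_sub_comm, this (Nat.le_of_not_le hji), Nat.ModEq.comm]
  obtain ⟨d, rfl⟩ := Nat.exists_eq_add_of_le hji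
  have hcoprime : IsCoprime ((X - 1 : F[X]) ^ k) (X ^ j) :=
    IsCoprime.pow ⟨-1, 1, by ring⟩
  have hcancel : (X - 1 : F[X]) ^ k ∣ X ^ j * (X ^ d - 1) ↔ (X - 1 : F[X]) ^ k ∣ X ^ d - 1 :=
    ⟨hcoprime.dvd_of_dvd_mul_left, fun h => h.mul_left _⟩
  rw [pow_add, ← mul_sub_one, hcancel, X_sub_one_pow_dvd_X_pow_sub_one_iff p,
    Nat.ModEq.comm, Nat.modEq_iff_dvd' hji, Nat.add_sub_cancel_left]

lemma natCast_le_contactOrder_iff_modEq {f : F[X]} {i j k : ℕ} (hj : k ≤ contactOrder f j) :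
    (k : ℕ∞) ≤ contactOrder f i ↔ i ≡ j [MOD p ^ Nat.clog p k] := by
  rw [natCast_le_contactOrder_iff] at hj ⊢
  rw [← X_sub_one_pow_dvd_X_pow_sub_X_pow_iff (F := F) p,
    ← sub_sub_sub_cancel_left (X ^ j) (X ^ i) f, dvd_sub_right hj]

/-- Contact of order `m + 1` would occur at a position congruent to `j` modulo `p ^ clog p m`,
which is also `p ^ clog p (m + 1)`, hence at `j` itself. -/
lemma contactOrder_le_of_contactOrder_eq {f : F[X]} {j m : ℕ} (hj : contactOrder f j = m)
    (hm : m < p ^ Nat.clog p m) (i : ℕ) : contactOrder f i ≤ m := by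
  by_contra! hlt
  have hi : ((m + 1 : ℕ) : ℕ∞) ≤ contactOrder f i := Order.add_one_le_of_lt hlt
  have hmod : i ≡ j [MOD p ^ Nat.clog p m] := (natCast_le_contactOrder_iff_modEq p hj.ge).1 hlt.le
  have hp : p.Prime := Fact.out
  rw [(Nat.clog_eq_clog_succ_iff hp.one_lt).2 hm.ne'] at hmod
  have hle := (natCast_le_contactOrder_iff_modEq p hi).2 hmod.symm
  rw [hj, Nat.cast_le] at hle
  omega

lemma eq_of_contactOrder_eq {f : F[X]} {i j m : ℕ} (hi : i < p ^ Nat.clog p m)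
    (hj : j < p ^ Nat.clog p m) (hfi : contactOrder f i = m) (hfj : contactOrder f j = m) :
    i = j :=
  ((natCast_le_contactOrder_iff_modEq p hfj.ge).1 hfi.ge).eq_of_lt_of_lt hi hj

end OrderAtOne

section DivisibleCount

open Polynomial

variable {R : Type*} [CommRing R]

lemma range_ofFn [DecidableEq R] (N : ℕ) :
    Set.range (ofFn (R := R) N) = {f : R[X] | f.degree < N} := by
  ext f
  refine ⟨fun ⟨v, hv⟩ => hv ▸ ofFn_degree_lt v, fun hf => ⟨toFn N f, ?_⟩⟩
  ext i
  rcases lt_or_ge i N with hi | hi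
  · simp [hi, toFn]
  · rw [ofFn_coeff_eq_zero_of_ge _ hi, coeff_eq_zero_of_degree_lt (hf.trans_le (by simpa using hi))]

lemma image_ofFn_setOf_dvd [DecidableEq R] {P : R[X]} (hP : P.Monic) {N : ℕ}
    (hN : P.natDegree ≤ N) :
    ofFn N '' {v | P ∣ ofFn N v} = (P * ·) '' Set.range (ofFn (N - P.natDegree)) := by
  have hdegree (q : R[X]) : (P * q).degree < N ↔ q.degree < (N - P.natDegree : ℕ) := by
    rcases eq_or_ne q 0 with rfl | hq
    · simp
    have : Nontrivial R := nontrivial_iff.1 ⟨q, 0, hq⟩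
    rw [mul_comm, hP.degree_mul, degree_eq_natDegree hq, degree_eq_natDegree hP.ne_zero]
    norm_cast
    omega
  rw [range_ofFn]
  ext f
  constructor
  · rintro ⟨v, ⟨q, hq⟩, rfl⟩
    exact ⟨q, (hdegree q).1 (hq ▸ ofFn_degree_lt v), hq.symm⟩
  · rintro ⟨q, hq, rfl⟩
    obtain ⟨v, hv⟩ := (range_ofFn N).ge ((hdegree q).2 hq)
    exact ⟨v, Dvd.intro q hv.symm, hv⟩

lemma ncard_setOf_dvd_ofFn [DecidableEq R] [Finite R] {P : R[X]} (hP : P.Monic) {N : ℕ}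
    (hN : P.natDegree ≤ N) :
    {v : Fin N → R | P ∣ ofFn N v}.ncard = Nat.card R ^ (N - P.natDegree) := by
  have hinj : Function.Injective fun q : R[X] => P * q := hP.isRegular.left
  rw [← Set.ncard_image_of_injective _ (injective_ofFn N), image_ofFn_setOf_dvd hP hN,
    Set.ncard_image_of_injective _ hinj, ← Set.image_univ,
    Set.ncard_image_of_injective _ (injective_ofFn _), Set.ncard_univ, Nat.card_fun, Nat.card_fin]

lemma ncard_setOf_dvd_ofFn_sub [DecidableEq R] [Finite R] {P : R[X]} (hP : P.Monic) {N : ℕ}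
    (hN : P.natDegree ≤ N) (w : Fin N → R) :
    {v : Fin N → R | P ∣ ofFn N v - ofFn N w}.ncard = Nat.card R ^ (N - P.natDegree) := by
  have himage : (· - w) '' {v | P ∣ ofFn N v - ofFn N w} = {v | P ∣ ofFn N v} := by
    ext v
    refine ⟨?_, fun hv => ⟨v + w, ?_, add_sub_cancel_right v w⟩⟩
    · rintro ⟨u, hu, rfl⟩
      simpa using hu
    · simpa using hv
  rw [← ncard_setOf_dvd_ofFn hP hN, ← himage,
    Set.ncard_image_of_injective _ sub_left_injective]

end DivisibleCount

section PeriodicCount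

lemma count_mod_mul (P : ℕ → Prop) [DecidablePred P] (M K : ℕ) :
    Nat.count (fun j => P (j % M)) (M * K) = Nat.count P M * K := by
  induction K with
  | zero => simp
  | succ K ih =>
    have hblock : Nat.count (fun j => P ((M * K + j) % M)) M = Nat.count P M := by
      simp only [Nat.count_eq_card_filter_range, Nat.mul_add_mod]
      congr 1
      exact Finset.filter_congr fun j hj => by rw [Nat.mod_eq_of_lt (Finset.mem_range.1 hj)]
    rw [Nat.mul_succ, Nat.count_add, ih, hblock, Nat.mul_succ]

lemma count_le_mod (Z M K : ℕ) : Nat.count (fun j => Z ≤ j % M) (M * K) = (M - Z) * K := by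
  have hIco : (Finset.range M).filter (Z ≤ ·) = Finset.Ico Z M := by
    ext j
    simp [and_comm]
  rw [count_mod_mul, Nat.count_eq_card_filter_range, hIco, Nat.card_Ico]

end PeriodicCount

section Sequences

open Polynomial

variable {N : ℕ}

lemma genPoly_eq_ofFn (S : Fin N → ZMod 2) : genPoly S = ofFn N S := by
  simp only [genPoly, ofFn_eq_sum_monomial, C_mul_X_pow_eq_monomial]

lemma genPoly_add (S T : Fin N → ZMod 2) : genPoly (S + T) = genPoly S + genPoly T := by
  simp only [genPoly_eq_ofFn, map_add]

lemma genPoly_E1 (j : Fin N) : genPoly (E1 j) = X ^ (j : ℕ) := by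
  simp [genPoly, E1]

lemma genPoly_add_E1 (S : Fin N → ZMod 2) (j : Fin N) :
    genPoly (S + E1 j) = genPoly S - X ^ (j : ℕ) := by
  rw [genPoly_add, genPoly_E1, CharTwo.sub_eq_add]

lemma eval_one_genPoly (S : Fin N → ZMod 2) : (genPoly S).eval 1 = wt S := by
  have hindicator : ∀ x : ZMod 2, x = if x ≠ 0 then 1 else 0 := by decide
  simp only [genPoly, wt, eval_finsetSum, eval_mul, eval_C, eval_pow, eval_X, one_pow, mul_one,
    Finset.natCast_card_filter]
  exact Finset.sum_congr rfl fun i _ => hindicator (S i)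

lemma X_sub_one_dvd_genPoly_iff (S : Fin N → ZMod 2) : X - 1 ∣ genPoly S ↔ Even (wt S) := by
  rw [← C_1, dvd_iff_isRoot, IsRoot, eval_one_genPoly, ZMod.natCast_eq_zero_iff_even]

lemma one_le_contactOrder_genPoly_iff (S : Fin N → ZMod 2) (j : ℕ) :
    1 ≤ contactOrder (genPoly S) j ↔ Odd (wt S) := by
  rw [← Nat.cast_one, natCast_le_contactOrder_iff, pow_one, ← C_1, dvd_iff_isRoot, IsRoot, eval_sub,
    eval_one_genPoly, eval_pow, eval_X, one_pow, sub_eq_zero, ZMod.natCast_eq_one_iff_odd]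

lemma wt_E1 (j : Fin N) : wt (E1 j) = 1 := by
  simp [wt, E1, Finset.filter_eq']

lemma eq_zero_or_eq_E1_of_wt_le_one {T : Fin N → ZMod 2} (hT : wt T ≤ 1) :
    T = 0 ∨ ∃ j, T = E1 j := by
  have hone : ∀ x : ZMod 2, x ≠ 0 → x = 1 := by decide
  rw [or_iff_not_imp_left]
  intro hne
  obtain ⟨j, hj⟩ := Function.ne_iff.1 hne
  refine ⟨j, funext fun i => ?_⟩
  rw [E1]
  split_ifs with hij
  · exact hij ▸ hone _ hj
  · by_contra hi
    exact hij (Finset.card_le_one.1 hT i (by simpa using hi) j (by simpa using hj))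

lemma errLCZone_le_iff {S : Fin N → ZMod 2} {k Z c : ℕ} :
    errLCZone S k Z ≤ c ↔
      ∃ T, wt T ≤ k ∧ (∀ i : Fin N, Z ≤ (i : ℕ) → T i = 0) ∧ linComp (S + T) ≤ c := by
  constructor
  · intro h
    obtain ⟨T, hT, hzone, hL⟩ := Nat.sInf_mem
      (s := {c | ∃ T : Fin N → ZMod 2, wt T ≤ k ∧ (∀ i : Fin N, Z ≤ (i : ℕ) → T i = 0) ∧
        linComp (S + T) = c}) ⟨_, 0, by simp [wt], by simp, rfl⟩
    exact ⟨T, hT, hzone, hL.trans_le h⟩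
  · rintro ⟨T, hT, hzone, hL⟩
    refine le_trans (Nat.sInf_le ?_) hL
    exact ⟨T, hT, hzone, rfl⟩

lemma errLC_eq_errLCZone (S : Fin N → ZMod 2) (k : ℕ) : errLC S k = errLCZone S k N := by
  have hzone (T : Fin N → ZMod 2) : ∀ i : Fin N, N ≤ (i : ℕ) → T i = 0 :=
    fun i hi => absurd i.isLt hi.not_gt
  simp only [errLC, errLCZone, iff_true_intro (hzone _), true_and]

lemma ncard_setOf_natCast_le_contactOrder_genPoly {k : ℕ} (hk : k ≤ N) (j : Fin N) :
    {S : Fin N → ZMod 2 | (k : ℕ∞) ≤ contactOrder (genPoly S) j}.ncard = 2 ^ (N - k) := by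
  have hmonic : ((X - 1 : (ZMod 2)[X]) ^ k).Monic := (monic_X_sub_C 1).pow k
  have hdegree : ((X - 1 : (ZMod 2)[X]) ^ k).natDegree = k := by
    rw [← C_1, natDegree_pow, natDegree_X_sub_C, mul_one]
  have hcount := ncard_setOf_dvd_ofFn_sub hmonic (hdegree.le.trans hk) (E1 j)
  simpa only [← genPoly_eq_ofFn, genPoly_E1, hdegree, Nat.card_zmod,
    ← natCast_le_contactOrder_iff] using hcount

lemma ncard_setOf_contactOrder_genPoly_eq {m : ℕ} (hm : m < N) (j : Fin N) :
    {S : Fin N → ZMod 2 | contactOrder (genPoly S) j = m}.ncard = 2 ^ (N - m - 1) := by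
  have hdiff : {S : Fin N → ZMod 2 | contactOrder (genPoly S) j = m} =
      {S | (m : ℕ∞) ≤ contactOrder (genPoly S) j} \
        {S | ((m + 1 : ℕ) : ℕ∞) ≤ contactOrder (genPoly S) j} := by
    ext S
    simp only [Set.mem_ofPred_eq, Set.mem_sdiff]
    rw [Nat.cast_succ, ENat.add_one_le_iff (ENat.natCast_ne_top m), not_lt, le_antisymm_iff,
      and_comm]
  have hsub : {S : Fin N → ZMod 2 | ((m + 1 : ℕ) : ℕ∞) ≤ contactOrder (genPoly S) j} ⊆
      {S | (m : ℕ∞) ≤ contactOrder (genPoly S) j} :=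
    Set.ofPred_subset_ofPred.2 fun S hS => (Nat.cast_le.2 m.le_succ).trans hS
  rw [hdiff, Set.ncard_sdiff hsub, ncard_setOf_natCast_le_contactOrder_genPoly hm.le,
    ncard_setOf_natCast_le_contactOrder_genPoly (Nat.succ_le_of_lt hm), Nat.succ_eq_add_one,
    ← Nat.sub_sub]
  have hpow : 2 ^ (N - m) = 2 ^ (N - m - 1) * 2 := by rw [← pow_succ, Nat.sub_add_cancel (by omega)]
  omega

end Sequences

section TwoPowPeriod

open Polynomial

variable {n : ℕ} {S : Fin (2 ^ n) → ZMod 2}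

lemma linComp_le_iff {k : ℕ} (hk : k ≤ 2 ^ n) :
    linComp S ≤ 2 ^ n - k ↔ (X - 1) ^ k ∣ genPoly S := by
  have hfrobenius : (1 - X ^ 2 ^ n : (ZMod 2)[X]) = (X - 1) ^ 2 ^ n := by
    rw [sub_pow_char_pow, one_pow, CharTwo.sub_eq_add, CharTwo.sub_eq_add, add_comm]
  rw [linComp, hfrobenius, ← le_natDegree_gcd_X_sub_one_pow_iff hk]
  omega

/-- The error vector `T = 0` is useless here, because `X - 1` does not divide `genPoly S` for `S` of
odd weight. -/
lemma errLCZone_one_le_iff (hodd : Odd (wt S)) {k Z : ℕ} (hk0 : 0 < k) (hk : k ≤ 2 ^ n)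
    (hZ : Z ≤ 2 ^ n) :
    errLCZone S 1 Z ≤ 2 ^ n - k ↔ ∃ j < Z, (k : ℕ∞) ≤ contactOrder (genPoly S) j := by
  simp only [errLCZone_le_iff, linComp_le_iff hk, natCast_le_contactOrder_iff]
  constructor
  · rintro ⟨T, hT, hzone, hdvd⟩
    rcases eq_zero_or_eq_E1_of_wt_le_one hT with rfl | ⟨j, rfl⟩
    · rw [add_zero] at hdvd
      have heven := (X_sub_one_dvd_genPoly_iff S).1 ((dvd_pow_self _ hk0.ne').trans hdvd)
      exact absurd heven (Nat.not_even_iff_odd.2 hodd)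
    · rw [genPoly_add_E1] at hdvd
      refine ⟨j, lt_of_not_ge fun hj => ?_, hdvd⟩
      simpa [E1] using hzone j hj
  · rintro ⟨j, hj, hdvd⟩
    refine ⟨E1 ⟨j, hj.trans_le hZ⟩, (wt_E1 _).le, fun i hi => ?_, ?_⟩
    · exact if_neg fun hij => (hj.trans_le hi).ne' (congrArg Fin.val hij)
    · rwa [genPoly_add_E1]

lemma errLCZone_one_eq_iff (hodd : Odd (wt S)) {k Z : ℕ} (hk0 : 0 < k) (hk : k < 2 ^ n)
    (hZ : Z ≤ 2 ^ n) :
    errLCZone S 1 Z = 2 ^ n - k ↔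
      (∃ j < Z, (k : ℕ∞) ≤ contactOrder (genPoly S) j) ∧
        ∀ j < Z, ¬ ((k + 1 : ℕ) : ℕ∞) ≤ contactOrder (genPoly S) j := by
  have hnot : (∀ j < Z, ¬ ((k + 1 : ℕ) : ℕ∞) ≤ contactOrder (genPoly S) j) ↔
      ¬ errLCZone S 1 Z ≤ 2 ^ n - (k + 1) := by
    rw [errLCZone_one_le_iff hodd k.succ_pos hk hZ]
    simp only [not_exists, not_and]
  rw [hnot, ← errLCZone_one_le_iff hodd hk0 hk.le hZ]
  omega

lemma odd_wt_and_errLC_one_eq_iff {m : ℕ} (hm0 : 0 < m) (hmn : m < 2 ^ n)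
    (hm : m < 2 ^ Nat.clog 2 m) :
    Odd (wt S) ∧ errLC S 1 = 2 ^ n - m ↔
      ∃ j < 2 ^ Nat.clog 2 m, contactOrder (genPoly S) j = m := by
  have hclog : 2 ^ Nat.clog 2 m ≤ 2 ^ n :=
    Nat.pow_le_pow_right two_pos (Nat.clog_le_of_le_pow hmn.le)
  rw [errLC_eq_errLCZone]
  constructor
  · rintro ⟨hodd, hL⟩
    obtain ⟨⟨i, -, hi⟩, hmax⟩ := (errLCZone_one_eq_iff hodd hm0 hmn le_rfl).1 hL
    have hlt : i % 2 ^ Nat.clog 2 m < 2 ^ Nat.clog 2 m := Nat.mod_lt _ (by positivity)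
    have hle := (natCast_le_contactOrder_iff_modEq 2 hi).2 (Nat.mod_modEq i _)
    refine ⟨_, hlt, hle.antisymm' ?_⟩
    exact Order.le_of_lt_add_one (not_le.1 (hmax _ (hlt.trans_le hclog)))
  · rintro ⟨j, hj, hcontact⟩
    have hodd : Odd (wt S) := by
      rw [← one_le_contactOrder_genPoly_iff S j, hcontact]
      exact_mod_cast hm0
    refine ⟨hodd, (errLCZone_one_eq_iff hodd hm0 hmn le_rfl).2
      ⟨⟨j, hj.trans_le hclog, hcontact.ge⟩, fun i _ hi => ?_⟩⟩
    have hle := hi.trans (contactOrder_le_of_contactOrder_eq 2 hcontact hm i)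
    exact absurd (Nat.cast_le.1 hle) m.not_succ_le_self

lemma errLCZone_one_eq_iff_le_mod {a Z j : ℕ} (han : a < n) (haZ : 2 ^ a ≤ Z) (hZ : Z ≤ 2 ^ n)
    (hj : ((2 ^ a + 1 : ℕ) : ℕ∞) ≤ contactOrder (genPoly S) j) :
    errLCZone S 1 Z = 2 ^ n - 2 ^ a ↔ Z ≤ j % 2 ^ (a + 1) := by
  have hodd : Odd (wt S) :=
    (one_le_contactOrder_genPoly_iff S j).1 (le_trans (by simp) hj)
  have hclog : Nat.clog 2 (2 ^ a + 1) = a + 1 := by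
    refine le_antisymm (Nat.clog_le_of_le_pow ?_) ((Nat.lt_clog_iff_pow_lt one_lt_two).2 (by simp))
    rw [pow_succ, mul_two]
    exact Nat.add_le_add_left Nat.one_le_two_pow _
  have hreach : ∃ i < Z, ((2 ^ a : ℕ) : ℕ∞) ≤ contactOrder (genPoly S) i := by
    refine ⟨j % 2 ^ a, (Nat.mod_lt _ (by positivity)).trans_le haZ, ?_⟩
    rw [natCast_le_contactOrder_iff_modEq 2 ((Nat.cast_le.2 (Nat.le_succ _)).trans hj),
      Nat.clog_pow _ _ one_lt_two]
    exact Nat.mod_modEq j _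
  rw [errLCZone_one_eq_iff hodd (by positivity) (Nat.pow_lt_pow_right one_lt_two han) hZ,
    and_iff_right hreach]
  simp only [natCast_le_contactOrder_iff_modEq 2 hj, hclog]
  constructor
  · intro h
    exact le_of_not_gt fun hlt => h _ hlt (Nat.mod_modEq j _)
  · intro h i hi hmod
    exact (hi.trans_le h).not_ge (hmod ▸ Nat.mod_le i _)

lemma setOf_odd_wt_errLC_one_errLCZone_one_eq_biUnion {Z m a : ℕ} (hmn : m < 2 ^ n)
    (hm : m < 2 ^ Nat.clog 2 m) (ha : a < Nat.clog 2 m) (haZ : 2 ^ a ≤ Z) (hZ : Z ≤ 2 ^ n) :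
    {S : Fin (2 ^ n) → ZMod 2 | Odd (wt S) ∧ errLC S 1 = 2 ^ n - m ∧
      errLCZone S 1 Z = 2 ^ n - 2 ^ a} =
      ⋃ j ∈ {j ∈ Finset.range (2 ^ Nat.clog 2 m) | Z ≤ j % 2 ^ (a + 1)},
        {S | contactOrder (genPoly S) j = m} := by
  have ham : 2 ^ a < m := Nat.pow_lt_of_lt_clog ha
  have han : a < n := ha.trans_le (Nat.clog_le_of_le_pow hmn.le)
  ext S
  simp only [Set.mem_ofPred_eq, Set.mem_iUnion, Finset.mem_filter, Finset.mem_range, exists_prop]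
  rw [← and_assoc, odd_wt_and_errLC_one_eq_iff (Nat.zero_lt_of_lt ham) hmn hm]
  have hzone {j : ℕ} (hj : contactOrder (genPoly S) j = m) :
      errLCZone S 1 Z = 2 ^ n - 2 ^ a ↔ Z ≤ j % 2 ^ (a + 1) :=
    errLCZone_one_eq_iff_le_mod han haZ hZ (hj ▸ Nat.cast_le.2 ham)
  constructor
  · rintro ⟨⟨j, hj, hcontact⟩, hL⟩
    exact ⟨j, ⟨hj, (hzone hcontact).1 hL⟩, hcontact⟩
  · rintro ⟨j, ⟨hj, hjZ⟩, hcontact⟩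
    exact ⟨⟨j, hj, hcontact⟩, (hzone hcontact).2 hjZ⟩

lemma ncard_setOf_odd_wt_errLC_one_errLCZone_one {Z m a : ℕ} (hmn : m < 2 ^ n)
    (hm : m < 2 ^ Nat.clog 2 m) (ha : a < Nat.clog 2 m) (haZ : 2 ^ a ≤ Z) (hZ : Z ≤ 2 ^ n) :
    {S : Fin (2 ^ n) → ZMod 2 | Odd (wt S) ∧ errLC S 1 = 2 ^ n - m ∧
      errLCZone S 1 Z = 2 ^ n - 2 ^ a}.ncard =
      (2 ^ (a + 1) - Z) * 2 ^ (Nat.clog 2 m - (a + 1)) * 2 ^ (2 ^ n - m - 1) := by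
  rw [setOf_odd_wt_errLC_one_errLCZone_one_eq_biUnion hmn hm ha haZ hZ]
  set J := {j ∈ Finset.range (2 ^ Nat.clog 2 m) | Z ≤ j % 2 ^ (a + 1)}
  have hJlt {j : ℕ} (hj : j ∈ J) : j < 2 ^ Nat.clog 2 m :=
    Finset.mem_range.1 (Finset.mem_filter.1 hj).1
  have hclog : 2 ^ Nat.clog 2 m ≤ 2 ^ n :=
    Nat.pow_le_pow_right two_pos (Nat.clog_le_of_le_pow hmn.le)
  have hdisjoint : (J : Set ℕ).PairwiseDisjoint
      fun j => {S : Fin (2 ^ n) → ZMod 2 | contactOrder (genPoly S) j = m} :=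
    fun i hi j hj hij => Set.disjoint_left.2 fun S hSi hSj =>
      hij (eq_of_contactOrder_eq 2 (hJlt hi) (hJlt hj) hSi hSj)
  have hfiber (j : ℕ) (hj : j ∈ J) :
      {S : Fin (2 ^ n) → ZMod 2 | contactOrder (genPoly S) j = m}.ncard = 2 ^ (2 ^ n - m - 1) :=
    ncard_setOf_contactOrder_genPoly_eq hmn ⟨j, (hJlt hj).trans_le hclog⟩
  have hcard : J.card = (2 ^ (a + 1) - Z) * 2 ^ (Nat.clog 2 m - (a + 1)) := by
    rw [← count_le_mod, pow_mul_pow_sub 2 ha, Nat.count_eq_card_filter_range]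
  calc (⋃ j ∈ J, {S : Fin (2 ^ n) → ZMod 2 | contactOrder (genPoly S) j = m}).ncard
    _ = ∑ j ∈ J, {S : Fin (2 ^ n) → ZMod 2 | contactOrder (genPoly S) j = m}.ncard := by
      rw [← finsum_mem_coe_finset]
      exact J.finite_toSet.ncard_biUnion (fun j _ => Set.toFinite _) hdisjoint
    _ = (2 ^ (a + 1) - Z) * 2 ^ (Nat.clog 2 m - (a + 1)) * 2 ^ (2 ^ n - m - 1) := by
      rw [Finset.sum_congr rfl hfiber, Finset.sum_const, smul_eq_mul, hcard]

end TwoPowPeriod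

/-- Case `s > a`: exactly `2^{c-1+s} - Z · 2^{c+s-a-2}` odd-weight sequences with
`L_1(S) = c` satisfy `L_{1;Z}(S) = 2^n - 2^a`. -/
theorem stmt12 (n Z s c : ℕ) (hn : 4 ≤ n) (hZ0 : 0 < Z) (hZ : Z ≤ 2^n)
    (h1 : 2^n - 2^s < c) (h2 : c < 2^n - 2^(s-1)) (hsa : Nat.log 2 Z < s) :
    {S : Fin (2^n) → ZMod 2 | Odd (wt S) ∧ errLC S 1 = c ∧
      errLCZone S 1 Z = 2^n - 2^(Nat.log 2 Z)}.ncard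
      = 2^(c - 1 + s) - Z * 2^(c + s - Nat.log 2 Z - 2) := by
  have haZ : 2 ^ Nat.log 2 Z ≤ Z := Nat.pow_log_le_self 2 hZ0.ne'
  have hpos : 0 < 2 ^ (s - 1) := by positivity
  obtain ⟨m, hmn, rfl⟩ : ∃ m ≤ 2 ^ n, c = 2 ^ n - m := ⟨2 ^ n - c, by omega, by omega⟩
  have hclog : Nat.clog 2 m = s := by
    refine le_antisymm (Nat.clog_le_of_le_pow (by omega)) (Nat.le_of_pred_lt ?_)
    rw [Nat.pred_eq_sub_one]
    exact (Nat.lt_clog_iff_pow_lt one_lt_two).2 (by omega)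
  have hm : m < 2 ^ Nat.clog 2 m := by rw [hclog]; omega
  rw [ncard_setOf_odd_wt_errLC_one_errLCZone_one (by omega) hm (hclog.symm ▸ hsa) haZ hZ, hclog]
  have hc : 0 < 2 ^ n - m := by omega
  generalize Nat.log 2 Z = a at hsa ⊢
  generalize 2 ^ n - m = c at hc ⊢
  have hexp_total : a + 1 + (s - (a + 1)) + (c - 1) = c - 1 + s := by omega
  have hexp_zone : s - (a + 1) + (c - 1) = c + s - a - 2 := by omega
  rw [Nat.sub_mul, Nat.sub_mul, mul_assoc Z, ← pow_add, ← pow_add, ← pow_add, hexp_total,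
    hexp_zone]
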